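/- arXiv:1403.6795 — 2 statements merged into one kernel-verified Lean document; each statement's English description precedes it below -/
import Mathlib

section
/- Let κ be a regular infinite cardinal. If a partial order P is κ-linked, then P has the κ⁺-stationary chain condition. -/
open Cardinal

/-- `C` is closed in `o`: every nonzero ordinal below `o` which is a limit of
elements of `C` belongs to `C`. -/
def IsClosedIn (C : Set Ordinal) (o : Ordinal) : Prop :=
  ∀ α : Ordinal, 0 < α → α < o →
    (∀ β < α, ∃ γ ∈ C, β < γ ∧ γ < α) → α ∈ C

/-- `C` is unbounded in `o`. -/
def IsUnboundedIn (C : Set Ordinal) (o : Ordinal) : Prop :=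
  ∀ β < o, ∃ γ ∈ C, β < γ ∧ γ < o

/-- `C` is a club (closed unbounded) subset of `o`. -/
def IsClubIn (C : Set Ordinal) (o : Ordinal) : Prop :=
  C ⊆ Set.Iio o ∧ IsClosedIn C o ∧ IsUnboundedIn C o

/-- `S^{κ⁺}_κ`: the set of ordinals below `κ⁺` of cofinality `κ`. -/
def cofSet (κ : Cardinal) : Set Ordinal :=
  {ξ : Ordinal | ξ < (Order.succ κ).ord ∧ ξ.cof = κ}

/-- `P` has the `κ⁺`-stationary chain condition: for every `κ⁺`-sequence of
elements of `P` there are a club `C ⊆ κ⁺` and a function `f` regressive on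
`C ∩ S^{κ⁺}_κ` such that conditions with indices in `C ∩ S^{κ⁺}_κ` getting the
same `f`-value are compatible. -/
def HasStationaryCC (κ : Cardinal) (P : Type) [PartialOrder P] : Prop :=
  ∀ p : Ordinal → P,
    ∃ (C : Set Ordinal) (f : Ordinal → Ordinal),
      IsClubIn C (Order.succ κ).ord ∧
      (∀ α ∈ C ∩ cofSet κ, f α < α) ∧
      ∀ α ∈ C ∩ cofSet κ, ∀ β ∈ C ∩ cofSet κ,
        f α = f β → ∃ r : P, r ≤ p α ∧ r ≤ p β

theorem isClosedIn_Ico (δ o : Ordinal) : IsClosedIn (Set.Ico δ o) o := by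
  intro α hα_pos hα_lt hα_lim
  obtain ⟨γ, hγ, -, hγα⟩ := hα_lim 0 hα_pos
  exact ⟨hγ.1.trans hγα.le, hα_lt⟩

theorem isUnboundedIn_Ico {δ o : Ordinal} (ho : Order.IsSuccPrelimit o) (hδ : δ < o) :
    IsUnboundedIn (Set.Ico δ o) o := by
  intro β hβ
  have hsucc : Order.succ (max β δ) < o := ho.succ_lt (max_lt hβ hδ)
  have hmax : max β δ < Order.succ (max β δ) := Order.lt_succ _
  exact ⟨_, ⟨(le_max_right β δ).trans hmax.le, hsucc⟩, (le_max_left β δ).trans_lt hmax, hsucc⟩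

theorem isClubIn_Ico {δ o : Ordinal} (ho : Order.IsSuccPrelimit o) (hδ : δ < o) :
    IsClubIn (Set.Ico δ o) o :=
  ⟨Set.Ico_subset_Iio_self, isClosedIn_Ico δ o, isUnboundedIn_Ico ho hδ⟩

theorem isClubIn_Ico_ord_succ {κ : Cardinal} (hκ : ℵ₀ ≤ κ) :
    IsClubIn (Set.Ico κ.ord (Order.succ κ).ord) (Order.succ κ).ord :=
  isClubIn_Ico (isSuccLimit_ord (hκ.trans (Order.le_succ κ))).isSuccPrelimit
    (ord_lt_ord.2 (Order.lt_succ κ))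

-- Every colour is below `κ`, so `c ∘ p` is regressive on the whole tail `[κ, κ⁺)`.
theorem linked_hasStationaryCC_general {κ : Cardinal} (hκ : ℵ₀ ≤ κ)
    {P : Type*} [Preorder P]
    (hlinked : ∃ c : P → Ordinal, (∀ p : P, c p < κ.ord) ∧
      ∀ p q : P, c p = c q → ∃ r : P, r ≤ p ∧ r ≤ q)
    (p : Ordinal → P) :
    ∃ (C : Set Ordinal) (f : Ordinal → Ordinal),
      IsClubIn C (Order.succ κ).ord ∧
      (∀ α ∈ C, f α < α) ∧
      ∀ α ∈ C, ∀ β ∈ C, f α = f β → ∃ r : P, r ≤ p α ∧ r ≤ p β := by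
  obtain ⟨c, hc, hcompat⟩ := hlinked
  exact ⟨Set.Ico κ.ord (Order.succ κ).ord, c ∘ p, isClubIn_Ico_ord_succ hκ,
    fun α hα => (hc (p α)).trans_le hα.1, fun α _ β _ => hcompat (p α) (p β)⟩

/-- If `κ` is a regular infinite cardinal and the partial order `P` is
`κ`-linked, then `P` has the `κ⁺`-stationary chain condition. -/
theorem linked_hasStationaryCC (κ : Cardinal) (hκ : κ.IsRegular)
    (P : Type) [PartialOrder P]
    (hlinked : ∃ c : P → Ordinal, (∀ p : P, c p < κ.ord) ∧
      ∀ p q : P, c p = c q → ∃ r : P, r ≤ p ∧ r ≤ q) :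
    HasStationaryCC κ P := by
  intro p
  obtain ⟨C, f, hC, hf, hcompat⟩ := linked_hasStationaryCC_general hκ.aleph0_le hlinked p
  exact ⟨C, f, hC, fun α hα => hf α hα.1, fun α hα β hβ => hcompat α hα.1 β hβ.1⟩
end

section
/- Let κ be a regular infinite cardinal and let P be a partial order with the κ⁺-stationary chain condition. Then for every sequence ⟨p_i : i < κ⁺⟩ of elements of P there is a stationary set T ⊆ κ⁺ such that p_α and p_β are compatible for all α, β ∈ T. -/
open Cardinal

/-- `S` is a stationary subset of `o`: it meets every club subset of `o`. -/
def IsStationaryIn (S : Set Ordinal) (o : Ordinal) : Prop :=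
  S ⊆ Set.Iio o ∧ ∀ C : Set Ordinal, IsClubIn C o → (S ∩ C).Nonempty

/-!
Two classical facts combine. First, `S^{κ⁺}_κ` is stationary, because the increasing enumeration of
a club of `κ⁺` is a normal function, hence takes the limit ordinal `κ` to an element of the club
with the same cofinality. Secondly, Fodor's lemma: if every fibre of a regressive function on `S`
were disjoint from a club, then the diagonal intersection of these clubs would be a club disjoint
from `S`. The chain condition supplies a regressive function on `C ∩ S^{κ⁺}_κ`, which is stationary,
and any stationary fibre of it serves as `T`.

Both are proved for clubs of a well-order whose order type is a regular cardinal, which for `κ⁺` is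
`Set.Iio (Order.succ κ).ord`; its points are ordinals one universe up, whence the cardinal lifts.
-/

open Order Set Set.Notation

universe u

section WellOrder

variable {α : Type u} [LinearOrder α]

/-- The diagonal intersection of a family of sets indexed by the points of `α`. -/
def diagInter (D : α → Set α) : Set α :=
  {a | ∀ b < a, a ∈ D b}

theorem dirSupClosed_diagInter {D : α → Set α} (hD : ∀ b, DirSupClosed (D b)) :
    DirSupClosed (diagInter D) := by
  intro t ht _ _ a ha b hb
  obtain ⟨c, hct, hbc⟩ := (lt_isLUB_iff ha).1 hb
  have tail_subset : t ∩ Ici c ⊆ D b := fun x hx ↦ ht hx.1 b (hbc.trans_le hx.2)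
  exact hD b tail_subset ⟨c, hct, le_rfl⟩ (.of_linearOrder _) (ha.inter_Ici_of_mem hct)

theorem cof_Iio_map_of_isNormal {β : Type u} [LinearOrder β] {f : α → β} (hf : IsNormal f) {a : α}
    (ha : IsSuccLimit a) : cof (Iio (f a)) = cof (Iio a) := by
  refine (cof_congr_of_strictMono (hf.to_Iio a).strictMono fun ⟨b, hb⟩ ↦ ?_).symm
  obtain ⟨c, hca, hbc⟩ := (hf.lt_iff_exists_lt ha).1 hb
  exact ⟨_, mem_range_self ⟨c, hca⟩, hbc.le⟩

variable [WellFoundedLT α]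

theorem exists_isLUB_range_nat (hα : ℵ₀ < cof α) (g : ℕ → α) : ∃ a, IsLUB (range g) a := by
  have hg : BddAbove (range g) := .of_not_isCofinal fun h ↦
    (cof_le h).not_gt ((countable_range g).le_aleph0.trans_lt hα)
  exact ⟨_, wellFounded_lt.min_mem _ hg, fun _ ↦ wellFounded_lt.min_le⟩

theorem isStationary_inter_isClub (hα : cof α ≠ ℵ₀) {s t : Set α} (hs : IsStationary s)
    (ht : IsClub t) : IsStationary (s ∩ t) := fun u hu ↦ by
  simpa only [inter_assoc] using hs (ht.inter hα hu)

variable [IsRegularCardinalOrder α]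

theorem isClub_biInter_Iio (hα : cof α ≠ ℵ₀) {D : α → Set α} (hD : ∀ b, IsClub (D b)) (a : α) :
    IsClub (⋂ b : Iio a, D b) := by
  refine .iInter hα ?_ fun b ↦ hD b
  simpa only [Cardinal.lift_id, cof_eq_cardinalMk] using mk_Iio_lt a ord_cardinalMk

theorem isClub_diagInter (hα : ℵ₀ < cof α) {D : α → Set α} (hD : ∀ b, IsClub (D b)) :
    IsClub (diagInter D) := by
  refine ⟨dirSupClosed_diagInter fun b ↦ (hD b).dirSupClosed, fun a ↦ ?_⟩
  choose next next_mem le_next using fun x ↦ (isClub_biInter_Iio hα.ne' hD x).isCofinal x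
  let g (n : ℕ) : α := next^[n] a
  have g_succ (n : ℕ) : g (n + 1) = next (g n) := Function.iterate_succ_apply' next n a
  have g_mono : Monotone g := monotone_nat_of_le_succ fun n ↦ (le_next _).trans_eq (g_succ n).symm
  obtain ⟨δ, hδ⟩ := exists_isLUB_range_nat hα g
  refine ⟨δ, fun b hb ↦ ?_, hδ.1 ⟨0, rfl⟩⟩
  obtain ⟨_, ⟨n, rfl⟩, hbn⟩ := (lt_isLUB_iff hδ).1 hb
  have tail_mem (m : ℕ) : g (m + n + 1) ∈ D b := by
    rw [g_succ]
    exact mem_iInter.1 (next_mem _) ⟨b, hbn.trans_le (g_mono (Nat.le_add_left n m))⟩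
  have hδ_tail : IsLUB (range fun m ↦ g (m + n + 1)) δ := by
    refine ⟨by rintro _ ⟨m, rfl⟩; exact hδ.1 (mem_range_self _), fun u hu ↦ hδ.2 ?_⟩
    rintro _ ⟨m, rfl⟩
    exact (g_mono (by lia)).trans (hu (mem_range_self m))
  exact (hD b).isLUB_mem (range_subset_iff.2 tail_mem) (range_nonempty _) hδ_tail

theorem exists_isStationary_fiber (hα : ℵ₀ < cof α) {s : Set α} (hs : IsStationary s) {f : α → α}
    (hf : ∀ a ∈ s, f a < a) : ∃ b, IsStationary {a ∈ s | f a = b} := by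
  by_contra! hfib
  simp only [not_isStationary_iff] at hfib
  choose D hD hdisj using hfib
  obtain ⟨a, has, haD⟩ := hs (isClub_diagInter hα hD)
  exact (hdisj (f a)).notMem_of_mem_left ⟨has, rfl⟩ (haD _ (hf a has))

theorem isStationary_setOf_cof_Iio_eq {a : α} (ha : IsSuccLimit a) :
    IsStationary {b : α | cof (Iio b) = cof (Iio a)} := fun _ ht ↦
  ⟨_, cof_Iio_map_of_isNormal ht.isNormal_enum ha, (enum _ ht.isCofinal a).2⟩

end WellOrder

section InitialSegment

theorem isClub_preimage_Iio {C : Set Ordinal} {o : Ordinal} (hC : IsClubIn C o) :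
    IsClub (Iio o ↓∩ C) := by
  obtain ⟨_, hclosed, hunbdd⟩ := hC
  refine ⟨fun t ht ht₀ _ a ha ↦ ?_, fun a ↦ ?_⟩
  · by_cases hat : a ∈ t
    · exact ht hat
    have exists_between (β : Ordinal) (hβ : β < a) : ∃ γ ∈ C, β < γ ∧ γ < a := by
      obtain ⟨c, hct, hβc⟩ := (lt_isLUB_iff ha).1 (show (⟨β, hβ.trans a.2⟩ : Iio o) < a from hβ)
      exact ⟨c, ht hct, hβc, (ha.1 hct).lt_of_ne fun h ↦ hat (h ▸ hct)⟩
    obtain ⟨c, hct⟩ := ht₀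
    have hca : c < a := (ha.1 hct).lt_of_ne fun h ↦ hat (h ▸ hct)
    exact hclosed a (zero_le.trans_lt hca) a.2 exists_between
  · obtain ⟨γ, hγC, haγ, hγ⟩ := hunbdd a a.2
    exact ⟨⟨γ, hγ⟩, hγC, haγ.le⟩

theorem isStationaryIn_image_val {o : Ordinal} {T : Set (Iio o)} (hT : IsStationary T) :
    IsStationaryIn (Subtype.val '' T) o := by
  refine ⟨by rintro _ ⟨a, -, rfl⟩; exact a.2, fun C hC ↦ ?_⟩
  obtain ⟨a, haT, haC⟩ := hT (isClub_preimage_Iio hC)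
  exact ⟨a, mem_image_of_mem _ haT, haC⟩

theorem isSuccLimit_of_val {α : Type*} [Preorder α] {s : Set α} (hs : IsLowerSet s) {a : s}
    (ha : IsSuccLimit a.1) : IsSuccLimit a := by
  refine ⟨fun hmin ↦ ha.not_isMin fun b hb ↦ hmin (b := ⟨b, hs hb a.2⟩) hb, fun b hb ↦ ?_⟩
  exact ha.isSuccPrelimit b ⟨hb.lt, fun c hbc hca ↦ hb.2 (c := ⟨c, hs hca.le a.2⟩) hbc hca⟩

theorem cof_Iio_subtype {o : Ordinal.{u}} (a : Iio o) :
    cof (Iio a) = Cardinal.lift.{u + 1} a.1.cof := by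
  rw [Ordinal.lift_cof, ← Ordinal.cof_Iio]
  exact cof_congr_of_strictMono (f := fun x : Iio a ↦ (⟨x.1.1, x.2⟩ : Iio a.1)) (fun _ _ h ↦ h)
    fun x ↦ ⟨x, ⟨⟨⟨x, Iio_subset_Iio a.2.le x.2⟩, x.2⟩, rfl⟩, le_rfl⟩

theorem cof_Iio_ord {c : Cardinal.{u}} (hc : c.IsRegular) :
    cof (Iio c.ord) = Cardinal.lift.{u + 1} c := by
  rw [Ordinal.cof_Iio, ← Ordinal.lift_cof, hc.cof_ord]

theorem isRegularCardinalOrder_Iio_ord {c : Cardinal} (hc : c.IsRegular) :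
    IsRegularCardinalOrder (Iio c.ord) where
  type_lt_le_ord_cof := by rw [cof_Iio_ord hc, Ordinal.type_lt_Iio, Cardinal.lift_ord]

theorem isStationary_preimage_cofSet {κ : Cardinal} (hκ : κ.IsRegular) :
    IsStationary (Iio (succ κ).ord ↓∩ cofSet κ) := by
  have := isRegularCardinalOrder_Iio_ord (isRegular_succ hκ.aleph0_le)
  let k : Iio (succ κ).ord := ⟨κ.ord, ord_lt_ord.2 (lt_succ κ)⟩
  have hk : IsSuccLimit k := isSuccLimit_of_val (isLowerSet_Iio _) (isSuccLimit_ord hκ.aleph0_le)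
  refine (isStationary_setOf_cof_Iio_eq hk).mono fun a ha ↦ ⟨a.2, ?_⟩
  rwa [mem_ofPred_eq, cof_Iio_subtype, cof_Iio_subtype, Cardinal.lift_inj, hκ.cof_ord] at ha

end InitialSegment

/-- If `κ` is a regular infinite cardinal and `P` has the `κ⁺`-stationary chain
condition, then every `κ⁺`-sequence of elements of `P` has a pairwise
compatible subsequence indexed by a stationary subset of `κ⁺`. -/
theorem stationaryCC_knaster (κ : Cardinal) (hκ : κ.IsRegular)
    (P : Type) [PartialOrder P] (hcc : HasStationaryCC κ P)
    (p : Ordinal → P) :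
    ∃ T : Set Ordinal, IsStationaryIn T (Order.succ κ).ord ∧
      ∀ α ∈ T, ∀ β ∈ T, ∃ r : P, r ≤ p α ∧ r ≤ p β := by
  obtain ⟨C, f, hC, hf, hcompat⟩ := hcc p
  have hreg := isRegular_succ hκ.aleph0_le
  have := isRegularCardinalOrder_Iio_ord hreg
  have hcof : ℵ₀ < cof (Iio (succ κ).ord) := by
    rw [cof_Iio_ord hreg, aleph0_lt_lift]
    exact hκ.aleph0_le.trans_lt (lt_succ κ)
  have hS : IsStationary (Iio (succ κ).ord ↓∩ (C ∩ cofSet κ)) := by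
    rw [inter_comm]
    exact isStationary_inter_isClub hcof.ne' (isStationary_preimage_cofSet hκ)
      (isClub_preimage_Iio hC)
  have := hS.nonempty.to_type
  choose! g hg_lt hg_val using fun (a : Iio (succ κ).ord) (ha : a.1 ∈ C ∩ cofSet κ) ↦
    show ∃ b < a, b.1 = f a from ⟨⟨f a, (hf a ha).trans a.2⟩, hf a ha, rfl⟩
  obtain ⟨γ, hγ⟩ := exists_isStationary_fiber hcof hS hg_lt
  refine ⟨_, isStationaryIn_image_val hγ, ?_⟩
  rintro _ ⟨α, ⟨hα, hgα⟩, rfl⟩ _ ⟨β, ⟨hβ, hgβ⟩, rfl⟩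
  exact hcompat α hα β hβ (by rw [← hg_val α hα, ← hg_val β hβ, hgα, hgβ])
end
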